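/- arXiv:2005.11792 — 10 statements merged into one kernel-verified Lean document; each statement's English description precedes it below -/
import Mathlib

section
/- Let π* be an optimal assignment for weights w and let δ be an allowable perturbation for (w, π*). If δ' is another perturbation satisfying δ'(a,b) ≤ δ(a,b) for every edge (a,b) assigned in π* and δ'(a,b) ≥ δ(a,b) for every edge (a,b) not assigned in π*, then δ' is an allowable perturbation for (w, π*). -/
open Finset Filter Topology

/-- Cost of an assignment `π : T → A` under weights `w : A × T → ℝ`. -/
noncomputable def cost {A T : Type*} [Fintype T] (w : A × T → ℝ) (π : T → A) : ℝ :=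
  ∑ b : T, w (π b, b)

/-- `πs` is an optimal assignment for weights `w`: it is injective (an assignment)
and minimizes the cost among all assignments. -/
def Optimal {A T : Type*} [Fintype T] (w : A × T → ℝ) (πs : T → A) : Prop :=
  Function.Injective πs ∧ ∀ π : T → A, Function.Injective π → cost w πs ≤ cost w π

/-- `δ` is an allowable perturbation for `(w, πs)`: `πs` remains optimal for `w + δ`. -/
def Allowable {A T : Type*} [Fintype T] (w δ : A × T → ℝ) (πs : T → A) : Prop :=
  Optimal (w + δ) πs

theorem stmt0 {A T : Type*} [Fintype A] [Fintype T] [Nonempty A] [Nonempty T]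
    (hAT : Fintype.card T ≤ Fintype.card A)
    (w δ δ' : A × T → ℝ) (πs : T → A)
    (hopt : Optimal w πs)
    (hδ : Allowable w δ πs)
    (h1 : ∀ a b, πs b = a → δ' (a, b) ≤ δ (a, b))
    (h2 : ∀ a b, πs b ≠ a → δ (a, b) ≤ δ' (a, b)) :
    Allowable w δ' πs := by
  refine ⟨hδ.1, fun π hπ => ?_⟩
  have change_le : cost (δ' - δ) πs ≤ cost (δ' - δ) π := by
    refine Finset.sum_le_sum fun b _ => ?_
    by_cases hb : πs b = π b
    · rw [hb]
    · have assigned := h1 _ b rfl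
      have unassigned := h2 _ b hb
      simp only [Pi.sub_apply]
      linarith
  have cost_split (ρ : T → A) : cost (w + δ') ρ = cost (w + δ) ρ + cost (δ' - δ) ρ := by
    simp only [cost, ← Finset.sum_add_distrib, Pi.add_apply, Pi.sub_apply]
    exact Finset.sum_congr rfl fun b _ => by ring
  rw [cost_split, cost_split]
  exact add_le_add (hδ.2 π hπ) change_le
end

section
/- Let π* be an assignment and let δ be a perturbation satisfying δ(a,b) ≤ 0 for every edge (a,b) assigned in π* and δ(a,b) ≥ 0 for every edge (a,b) not assigned in π*. Then f(δ, π*) ≤ f(δ, π) for every assignment π; consequently, if π* is optimal for w, then δ is an allowable perturbation for (w, π*). -/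
open Finset Filter Topology

/-- The cost of an assignment is additive in the weights. -/
theorem cost_add {A T : Type*} [Fintype T] (w δ : A × T → ℝ) (π : T → A) :
    cost (w + δ) π = cost w π + cost δ π := by
  simp [cost, Finset.sum_add_distrib]

/-- If `δ` is nonpositive on the edges of `πs` and nonnegative elsewhere, then `πs` minimizes the
cost under `δ` among all maps `T → A`. -/
theorem cost_le_cost_of_sign {A T : Type*} [Fintype T] {δ : A × T → ℝ} {πs : T → A}
    (h1 : ∀ a b, πs b = a → δ (a, b) ≤ 0) (h2 : ∀ a b, πs b ≠ a → 0 ≤ δ (a, b)) (π : T → A) :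
    cost δ πs ≤ cost δ π := by
  refine Finset.sum_le_sum fun b _ => ?_
  by_cases h : πs b = π b
  · rw [h]
  · exact (h1 _ b rfl).trans (h2 _ b h)

theorem stmt1 {A T : Type*} [Fintype A] [Fintype T] [Nonempty A] [Nonempty T]
    (hAT : Fintype.card T ≤ Fintype.card A)
    (w δ : A × T → ℝ) (πs : T → A)
    (hπs : Function.Injective πs)
    (h1 : ∀ a b, πs b = a → δ (a, b) ≤ 0)
    (h2 : ∀ a b, πs b ≠ a → 0 ≤ δ (a, b)) :
    (∀ π : T → A, Function.Injective π → cost δ πs ≤ cost δ π) ∧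
    (Optimal w πs → Allowable w δ πs) := by
  refine ⟨fun π _ => cost_le_cost_of_sign h1 h2 π, fun hopt => ⟨hπs, fun π hπ => ?_⟩⟩
  rw [cost_add, cost_add]
  exact add_le_add (hopt.2 π hπ) (cost_le_cost_of_sign h1 h2 π)
end

section
/- Let π* be an optimal assignment for weights w and let (a,b) be an edge assigned in π*. Then for every real t with t ≤ s_w(a,b), the single-edge perturbation δ defined by δ(a,b) = t and δ = 0 on all other edges is an allowable perturbation for (w, π*). -/
open Finset Filter Topology

-- The element-wise sensitivity of edge `(a, b)` for weights `w` and assignment `πs`.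
open Classical in
noncomputable def sens {A T : Type*} [Fintype T] (w : A × T → ℝ) (πs : T → A)
    (a : A) (b : T) : ℝ :=
  if πs b = a then
    sInf {c | ∃ π : T → A, Function.Injective π ∧ π b ≠ a ∧ cost w π = c} - cost w πs
  else
    cost w πs - sInf {c | ∃ π : T → A, Function.Injective π ∧ π b = a ∧ cost w π = c}

/-- Perturbing a single edge `(a, b)` by `t` changes the cost of exactly those maps
that use this edge, and changes it by `t`. -/
theorem cost_add_single_edge {A T : Type*} [Fintype T] [DecidableEq A] [DecidableEq (A × T)]
    (w : A × T → ℝ) (π : T → A) (a : A) (b : T) (t : ℝ) :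
    cost (w + fun e => if e = (a, b) then t else 0) π =
      cost w π + if π b = a then t else 0 := by
  unfold cost
  simp only [Pi.add_apply, Finset.sum_add_distrib]
  congr 1
  rw [Finset.sum_eq_single b]
  · simp
  · intro c _ hc
    simp [hc]
  · simp

/-- An optimal assignment bounds the costs of all assignments avoiding an edge from below. -/
theorem Optimal.bddBelow_cost_avoiding {A T : Type*} [Fintype T] {w : A × T → ℝ} {πs : T → A}
    (hopt : Optimal w πs) (a : A) (b : T) :
    BddBelow {c | ∃ π : T → A, Function.Injective π ∧ π b ≠ a ∧ cost w π = c} := by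
  refine ⟨cost w πs, ?_⟩
  rintro _ ⟨π, hπ, -, rfl⟩
  exact hopt.2 π hπ

open Classical in
theorem stmt3 {A T : Type*} [Fintype A] [Fintype T] [Nonempty A] [Nonempty T]
    (hT : 2 ≤ Fintype.card T) (hAT : Fintype.card T ≤ Fintype.card A)
    (w : A × T → ℝ) (πs : T → A)
    (hopt : Optimal w πs)
    (a : A) (b : T) (hab : πs b = a)
    (t : ℝ) (ht : t ≤ sens w πs a b) :
    Allowable w (fun e => if e = (a, b) then t else 0) πs := by
  refine ⟨hopt.1, fun π hπ => ?_⟩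
  rw [cost_add_single_edge, cost_add_single_edge, if_pos hab]
  by_cases h : π b = a
  · rw [if_pos h]
    exact add_le_add_left (hopt.2 π hπ) t
  · rw [if_neg h]
    rw [sens, if_pos hab] at ht
    have hle := csInf_le (hopt.bddBelow_cost_avoiding a b) ⟨π, hπ, h, rfl⟩
    linarith
end

section
/- Let π* be an optimal assignment for weights w and let (a,b) be an edge not assigned in π*. Then for every real t with t ≥ s_w(a,b), the single-edge perturbation δ defined by δ(a,b) = t and δ = 0 on all other edges is an allowable perturbation for (w, π*). -/
open Finset Filter Topology

open Classical in
theorem cost_add_single {A T : Type*} [Fintype T] (w : A × T → ℝ) (π : T → A)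
    (a : A) (b : T) (t : ℝ) :
    cost (w + fun e => if e = (a, b) then t else 0) π
      = cost w π + if π b = a then t else 0 := by
  simp only [cost, Pi.add_apply, Finset.sum_add_distrib, Prod.mk.injEq]
  congr 1
  rw [Finset.sum_eq_single b] <;> simp +contextual

/-- The sensitivity of an unassigned edge bounds the improvement `πs` has over any assignment
using that edge. -/
theorem cost_le_cost_add_sens {A T : Type*} [Fintype T] {w : A × T → ℝ} {πs : T → A}
    (hopt : Optimal w πs) {a : A} {b : T} (hab : πs b ≠ a) {π : T → A}
    (hπ : Function.Injective π) (hb : π b = a) :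
    cost w πs ≤ cost w π + sens w πs a b := by
  have hle : sInf {c | ∃ π : T → A, Function.Injective π ∧ π b = a ∧ cost w π = c}
      ≤ cost w π := by
    refine csInf_le ⟨cost w πs, ?_⟩ ⟨π, hπ, hb, rfl⟩
    rintro _ ⟨σ, hσ, -, rfl⟩
    exact hopt.2 σ hσ
  rw [sens, if_neg hab]
  linarith

open Classical in
theorem stmt4 {A T : Type*} [Fintype A] [Fintype T] [Nonempty A] [Nonempty T]
    (hT : 2 ≤ Fintype.card T) (hAT : Fintype.card T ≤ Fintype.card A)
    (w : A × T → ℝ) (πs : T → A)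
    (hopt : Optimal w πs)
    (a : A) (b : T) (hab : πs b ≠ a)
    (t : ℝ) (ht : sens w πs a b ≤ t) :
    Allowable w (fun e => if e = (a, b) then t else 0) πs := by
  refine ⟨hopt.1, fun π hπ => ?_⟩
  rw [cost_add_single, cost_add_single, if_neg hab, add_zero]
  split_ifs with hb
  · linarith [cost_le_cost_add_sens hopt hab hπ hb]
  · simpa using hopt.2 π hπ
end

section
/- Let π* be an optimal assignment for weights w, let (a,b) be an edge, and let w̄ be the weights obtained from w by replacing w(a,b) with w(a,b) + s_w(a,b) (all other weights unchanged). If (a,b) is assigned in π*, then min{f(w̄,π) : π an assignment with π(b) ≠ a} = f(w̄, π*); if (a,b) is not assigned in π*, then min{f(w̄,π) : π an assignment with π(b) = a} = f(w̄, π*). -/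
open Finset Filter Topology

theorem cost_update_of_eq {A T : Type*} [Fintype T] [DecidableEq (A × T)] (w : A × T → ℝ)
    {a : A} {b : T} (s : ℝ) {π : T → A} (h : π b = a) :
    cost (fun e => if e = (a, b) then w e + s else w e) π = cost w π + s := by
  classical
  have hterm : ∀ t, (if (π t, t) = (a, b) then w (π t, t) + s else w (π t, t))
      = w (π t, t) + if t = b then s else 0 := by
    intro t
    by_cases ht : t = b
    · subst ht
      simp [h]
    · simp [ht]
  simp only [cost, hterm, Finset.sum_add_distrib, Finset.sum_ite_eq', Finset.mem_univ, if_true]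

theorem cost_update_of_ne {A T : Type*} [Fintype T] [DecidableEq (A × T)] (w : A × T → ℝ)
    {a : A} {b : T} (s : ℝ) {π : T → A} (h : π b ≠ a) :
    cost (fun e => if e = (a, b) then w e + s else w e) π = cost w π := by
  refine Finset.sum_congr rfl fun t _ => if_neg fun ht => h ?_
  obtain ⟨h₁, rfl⟩ := Prod.mk.inj ht
  exact h₁

theorem finite_setOf_cost {A T : Type*} [Finite A] [Fintype T] (w : A × T → ℝ)
    (p : (T → A) → Prop) : {c | ∃ π : T → A, Function.Injective π ∧ p π ∧ cost w π = c}.Finite :=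
  (Set.finite_range (cost w)).subset fun _ ⟨π, _, _, h⟩ => ⟨π, h⟩

open Classical in
theorem stmt5 {A T : Type*} [Fintype A] [Fintype T] [Nonempty A] [Nonempty T]
    (hT : 2 ≤ Fintype.card T) (hAT : Fintype.card T ≤ Fintype.card A)
    (w : A × T → ℝ) (πs : T → A)
    (hopt : Optimal w πs)
    (a : A) (b : T)
    (wbar : A × T → ℝ)
    (hwbar : wbar = fun e => if e = (a, b) then w e + sens w πs a b else w e) :
    (πs b = a →
      sInf {c | ∃ π : T → A, Function.Injective π ∧ π b ≠ a ∧ cost wbar π = c}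
        = cost wbar πs) ∧
    (πs b ≠ a →
      sInf {c | ∃ π : T → A, Function.Injective π ∧ π b = a ∧ cost wbar π = c}
        = cost wbar πs) := by
  have hcost : ∀ π : T → A, π b ≠ a → cost wbar π = cost w π :=
    fun π h => hwbar ▸ cost_update_of_ne w _ h
  have hcost_add : ∀ π : T → A, π b = a → cost wbar π = cost w π + sens w πs a b :=
    fun π h => hwbar ▸ cost_update_of_eq w _ h
  refine ⟨fun h => ?_, fun h => ?_⟩
  · have hset : {c | ∃ π : T → A, Function.Injective π ∧ π b ≠ a ∧ cost wbar π = c}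
        = {c | ∃ π : T → A, Function.Injective π ∧ π b ≠ a ∧ cost w π = c} := by
      ext c
      refine exists_congr fun π => and_congr_right fun _ => and_congr_right fun hπ => ?_
      rw [hcost π hπ]
    rw [hset, hcost_add πs h, sens, if_pos h]
    ring
  · set S := {c | ∃ π : T → A, Function.Injective π ∧ π b = a ∧ cost w π = c} with hS
    have hset : {c | ∃ π : T → A, Function.Injective π ∧ π b = a ∧ cost wbar π = c}
        = OrderIso.addRight (sens w πs a b) '' S := by
      ext c
      constructor
      · rintro ⟨π, hinj, hπ, rfl⟩
        exact ⟨cost w π, ⟨π, hinj, hπ, rfl⟩, (hcost_add π hπ).symm⟩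
      · rintro ⟨_, ⟨π, hinj, hπ, rfl⟩, rfl⟩
        exact ⟨π, hinj, hπ, hcost_add π hπ⟩
    have hne : S.Nonempty :=
      ⟨_, Equiv.swap (πs b) a ∘ πs, (Equiv.injective _).comp hopt.1,
        Equiv.swap_apply_left _ _, rfl⟩
    have hbdd : BddBelow S := (finite_setOf_cost w fun π => π b = a).bddBelow
    rw [hset, ← OrderIso.map_csInf' _ hne hbdd, hcost πs h, OrderIso.addRight_apply, sens,
      if_neg h, ← hS]
    ring
end

section
/- Let π* be an optimal assignment for weights w and let N = |T| (the maximal number of assigned edges in any assignment). Then the perturbation δ defined by δ(a,b) = s_w(a,b) / (2N) for every edge (a,b) is an allowable perturbation for (w, π*). -/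
open Finset Filter Topology

/-- If `πs` is optimal and `π` avoids an edge of `πs`, the sensitivity of that edge is at most
the cost gap between `π` and `πs`. -/
theorem sens_assigned_le {A T : Type*} [Fintype T] {w : A × T → ℝ} {πs π : T → A}
    (hopt : Optimal w πs) (hπ : Function.Injective π) {b : T} (hb : π b ≠ πs b) :
    sens w πs (πs b) b ≤ cost w π - cost w πs := by
  rw [sens, if_pos rfl]
  apply sub_le_sub_right
  refine csInf_le ⟨cost w πs, ?_⟩ ⟨π, hπ, hb, rfl⟩
  rintro _ ⟨σ, hσ, -, rfl⟩
  exact hopt.2 σ hσ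

/-- If `πs` is optimal and `π` uses an edge outside `πs`, the sensitivity of that edge is at least
minus the cost gap between `π` and `πs`. -/
theorem le_sens_unassigned {A T : Type*} [Fintype T] {w : A × T → ℝ} {πs π : T → A}
    (hopt : Optimal w πs) (hπ : Function.Injective π) {b : T} (hb : π b ≠ πs b) :
    cost w πs - cost w π ≤ sens w πs (π b) b := by
  rw [sens, if_neg hb.symm]
  apply sub_le_sub_left
  refine csInf_le ⟨cost w πs, ?_⟩ ⟨π, hπ, rfl, rfl⟩
  rintro _ ⟨σ, hσ, -, rfl⟩
  exact hopt.2 σ hσ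

theorem sens_sub_sens_le {A T : Type*} [Fintype T] {w : A × T → ℝ} {πs π : T → A}
    (hopt : Optimal w πs) (hπ : Function.Injective π) (b : T) :
    sens w πs (πs b) b - sens w πs (π b) b ≤ 2 * (cost w π - cost w πs) := by
  by_cases hb : π b = πs b
  · rw [hb, sub_self]
    linarith [hopt.2 π hπ]
  · linarith [sens_assigned_le hopt hπ hb, le_sens_unassigned hopt hπ hb]

theorem stmt7 {A T : Type*} [Fintype A] [Fintype T] [Nonempty A] [Nonempty T]
    (hT : 2 ≤ Fintype.card T) (hAT : Fintype.card T ≤ Fintype.card A)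
    (w : A × T → ℝ) (πs : T → A)
    (hopt : Optimal w πs) :
    Allowable w (fun e => sens w πs e.1 e.2 / (2 * (Fintype.card T : ℝ))) πs := by
  refine ⟨hopt.1, fun π hπ => ?_⟩
  rw [cost_add, cost_add]
  have hN : (0 : ℝ) < Fintype.card T := by exact_mod_cast Fintype.card_pos
  have hsum := Finset.sum_le_card_nsmul Finset.univ _ _
    fun b _ => sens_sub_sens_le hopt hπ b
  rw [Finset.sum_sub_distrib, nsmul_eq_mul, Finset.card_univ] at hsum
  have hδ : ∀ σ : T → A,
      cost (fun e => sens w πs e.1 e.2 / (2 * (Fintype.card T : ℝ))) σ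
        = (∑ b, sens w πs (σ b) b) / (2 * (Fintype.card T : ℝ)) :=
    fun σ => (Finset.sum_div _ _ _).symm
  have hle : (∑ b, sens w πs (πs b) b - ∑ b, sens w πs (π b) b) / (2 * (Fintype.card T : ℝ))
      ≤ cost w π - cost w πs := by
    rw [div_le_iff₀ (by positivity)]
    linarith
  rw [sub_div] at hle
  rw [hδ, hδ]
  linarith
end

section
/- Let π* be an optimal assignment for weights w and let δ be an allowable perturbation for (w, π*) satisfying δ(a,b) ≥ 0 for every edge assigned in π* and δ(a,b) ≤ 0 for every edge not assigned in π*. Then δ(a,b) ≤ s_w(a,b) for every edge (a,b) assigned in π*, and δ(a,b) ≥ s_w(a,b) for every edge (a,b) not assigned in π*; in particular |δ(a,b)| ≤ |s_w(a,b)| for every edge. -/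
open Finset Filter Topology

/-- If `δ` is nonnegative on the edges of `πs` and nonpositive elsewhere, and `πs` is optimal for
`w + δ`, then moving to an assignment that disagrees with `πs` at `b` costs at least
`δ (πs b, b) - δ (π b, b)` under `w`. -/
theorem Allowable.sub_le_cost_sub {A T : Type*} [Fintype T] {w δ : A × T → ℝ} {πs : T → A}
    (hδ : Allowable w δ πs) (h1 : ∀ a b, πs b = a → 0 ≤ δ (a, b))
    (h2 : ∀ a b, πs b ≠ a → δ (a, b) ≤ 0) {π : T → A} (hπ : Function.Injective π) (b : T) :
    δ (πs b, b) - δ (π b, b) ≤ cost w π - cost w πs := by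
  have hterm : ∀ c ∈ Finset.univ, 0 ≤ δ (πs c, c) - δ (π c, c) := by
    intro c _
    by_cases hc : πs c = π c
    · simp [hc]
    · linarith [h1 _ c rfl, h2 _ c hc]
  have hsingle := Finset.single_le_sum hterm (Finset.mem_univ b)
  have hle := hδ.2 π hπ
  simp only [cost, Pi.add_apply, Finset.sum_add_distrib, Finset.sum_sub_distrib] at *
  linarith

theorem stmt10 {A T : Type*} [Fintype A] [Fintype T] [Nonempty A] [Nonempty T]
    (hT : 2 ≤ Fintype.card T) (hAT : Fintype.card T ≤ Fintype.card A)
    (w δ : A × T → ℝ) (πs : T → A)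
    (hopt : Optimal w πs)
    (hδ : Allowable w δ πs)
    (h1 : ∀ a b, πs b = a → 0 ≤ δ (a, b))
    (h2 : ∀ a b, πs b ≠ a → δ (a, b) ≤ 0) :
    (∀ a b, πs b = a → δ (a, b) ≤ sens w πs a b) ∧
    (∀ a b, πs b ≠ a → sens w πs a b ≤ δ (a, b)) ∧
    (∀ a b, |δ (a, b)| ≤ |sens w πs a b|) := by
  have hA : 1 < Fintype.card A := by omega
  have assigned : ∀ a b, πs b = a → δ (a, b) ≤ sens w πs a b := by
    classical
    rintro a b rfl
    rw [sens, if_pos rfl, le_sub_iff_add_le]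
    refine le_csInf ?_ ?_
    · obtain ⟨a', ha'⟩ := Fintype.exists_ne_of_one_lt_card hA (πs b)
      exact ⟨_, Equiv.swap (πs b) a' ∘ πs, (Equiv.injective _).comp hopt.1, by simpa using ha', rfl⟩
    · rintro _ ⟨π, hπ, hb, rfl⟩
      linarith [hδ.sub_le_cost_sub h1 h2 hπ b, h2 _ b hb.symm]
  have unassigned : ∀ a b, πs b ≠ a → sens w πs a b ≤ δ (a, b) := by
    classical
    intro a b hab
    rw [sens, if_neg hab, sub_le_comm]
    refine le_csInf ?_ ?_
    · exact ⟨_, Equiv.swap (πs b) a ∘ πs, (Equiv.injective _).comp hopt.1, by simp, rfl⟩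
    · rintro _ ⟨π, hπ, rfl, rfl⟩
      linarith [hδ.sub_le_cost_sub h1 h2 hπ b, h1 _ b rfl]
  refine ⟨assigned, unassigned, fun a b => ?_⟩
  by_cases hab : πs b = a
  · exact abs_le_abs_of_nonneg (h1 a b hab) (assigned a b hab)
  · exact abs_le_abs_of_nonpos (h2 a b hab) (unassigned a b hab)
end

section
/- Let π* be an optimal assignment for weights w. Then every iterate Δ^k of the recursive sensitivity algorithm is an allowable perturbation for (w, π*); in particular π* is optimal for w + Δ^k for every k. -/
open Finset Filter Topology

/-- Iterates of the recursive sensitivity algorithm: `Δ⁰ = 0` and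
`Δ^{k+1}(a,b) = Δ^k(a,b) + s_{w+Δ^k}(a,b)/(2N)` with `N = |T|`. -/
noncomputable def iter {A T : Type*} [Fintype T] (w : A × T → ℝ) (πs : T → A) :
    ℕ → (A × T → ℝ)
  | 0 => 0
  | k + 1 => fun e =>
      iter w πs k e + sens (w + iter w πs k) πs e.1 e.2 / (2 * (Fintype.card T : ℝ))

/-- A single step of the recursive sensitivity algorithm preserves optimality. -/
theorem Optimal.add_sens {A T : Type*} [Fintype T] [Nonempty T] {w : A × T → ℝ} {πs : T → A}
    (hopt : Optimal w πs) :
    Optimal (w + fun e => sens w πs e.1 e.2 / (2 * (Fintype.card T : ℝ))) πs := by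
  refine ⟨hopt.1, fun π hπ => ?_⟩
  have hN : (0 : ℝ) < Fintype.card T := by exact_mod_cast Fintype.card_pos
  have hgap := hopt.2 π hπ
  have hsum : ∑ b : T, (sens w πs (πs b) b - sens w πs (π b) b) ≤
      Fintype.card T * (2 * (cost w π - cost w πs)) := by
    rw [← nsmul_eq_mul, ← Finset.card_univ]
    refine Finset.sum_le_card_nsmul _ _ _ fun b _ => ?_
    by_cases hb : π b = πs b
    · rw [hb]
      linarith
    · linarith [sens_assigned_le hopt hπ hb, le_sens_unassigned hopt hπ hb]
  rw [Finset.sum_sub_distrib] at hsum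
  have hdiv : (∑ b : T, sens w πs (πs b) b - ∑ b : T, sens w πs (π b) b) /
      (2 * (Fintype.card T : ℝ)) ≤ cost w π - cost w πs := by
    rw [div_le_iff₀ (by positivity)]
    linarith
  rw [cost_add, cost_add]
  simp only [cost, ← Finset.sum_div, sub_div] at hdiv ⊢
  linarith

theorem stmt12 {A T : Type*} [Fintype A] [Fintype T] [Nonempty A] [Nonempty T]
    (hT : 2 ≤ Fintype.card T) (hAT : Fintype.card T ≤ Fintype.card A)
    (w : A × T → ℝ) (πs : T → A)
    (hopt : Optimal w πs) :
    ∀ k : ℕ, Allowable w (iter w πs k) πs := by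
  intro k
  induction k with
  | zero => simpa [Allowable, iter] using hopt
  | succ k ih =>
    have h := Optimal.add_sens ih
    rwa [add_assoc] at h
end

section
/- Let π* be an optimal assignment for weights w and let Δ^k be the iterates of the recursive sensitivity algorithm. Then the element-wise sensitivities along the iterates converge to zero: for every edge (a,b), s_{w+Δ^k}(a,b) → 0 as k → ∞. -/
open Finset Filter Topology

section Sensitivity

variable {A T : Type*} [Fintype T] {w : A × T → ℝ} {πs π : T → A}

/-- The sensitivity of an assigned edge lies between `0` and the gap of any assignment avoiding
that edge. -/
lemma Optimal.sens_assigned_mem_Icc (h : Optimal w πs) (hπ : Function.Injective π) {b : T}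
    (hb : π b ≠ πs b) :
    sens w πs (πs b) b ∈ Set.Icc 0 (cost w π - cost w πs) := by
  rw [sens, if_pos rfl]
  have hlb : cost w πs ∈ lowerBounds
      {c | ∃ π : T → A, Function.Injective π ∧ π b ≠ πs b ∧ cost w π = c} := by
    rintro c ⟨ρ, hρ, -, rfl⟩
    exact h.2 ρ hρ
  have hmem : cost w π ∈
      {c | ∃ π : T → A, Function.Injective π ∧ π b ≠ πs b ∧ cost w π = c} := ⟨π, hπ, hb, rfl⟩
  exact ⟨sub_nonneg.2 (le_csInf ⟨_, hmem⟩ hlb), sub_le_sub_right (csInf_le ⟨_, hlb⟩ hmem) _⟩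

/-- The negated sensitivity of an unassigned edge lies between `0` and the gap of any assignment
using that edge. -/
lemma Optimal.neg_sens_unassigned_mem_Icc (h : Optimal w πs) (hπ : Function.Injective π) {b : T}
    (hb : π b ≠ πs b) :
    -sens w πs (π b) b ∈ Set.Icc 0 (cost w π - cost w πs) := by
  rw [sens, if_neg hb.symm, neg_sub]
  have hlb : cost w πs ∈ lowerBounds
      {c | ∃ ρ : T → A, Function.Injective ρ ∧ ρ b = π b ∧ cost w ρ = c} := by
    rintro c ⟨ρ, hρ, -, rfl⟩
    exact h.2 ρ hρ
  have hmem : cost w π ∈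
      {c | ∃ ρ : T → A, Function.Injective ρ ∧ ρ b = π b ∧ cost w ρ = c} := ⟨π, hπ, rfl, rfl⟩
  exact ⟨sub_nonneg.2 (le_csInf ⟨_, hmem⟩ hlb), sub_le_sub_right (csInf_le ⟨_, hlb⟩ hmem) _⟩

lemma Optimal.sens_sub_sens_mem_Icc (h : Optimal w πs) (hπ : Function.Injective π) (b : T) :
    sens w πs (πs b) b - sens w πs (π b) b ∈ Set.Icc 0 (2 * (cost w π - cost w πs)) := by
  by_cases hb : π b = πs b
  · have := h.2 π hπ
    rw [hb, sub_self]
    exact ⟨le_rfl, by linarith⟩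
  · obtain ⟨h₁, h₂⟩ := h.sens_assigned_mem_Icc hπ hb
    obtain ⟨h₃, h₄⟩ := h.neg_sens_unassigned_mem_Icc hπ hb
    exact ⟨by linarith, by linarith⟩

lemma gap_sub_gap_iter_succ (w : A × T → ℝ) (πs π : T → A) (k : ℕ) :
    (cost (w + iter w πs k) π - cost (w + iter w πs k) πs)
      - (cost (w + iter w πs (k + 1)) π - cost (w + iter w πs (k + 1)) πs)
      = (∑ b, (sens (w + iter w πs k) πs (πs b) b - sens (w + iter w πs k) πs (π b) b))
        / (2 * (Fintype.card T : ℝ)) := by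
  simp only [cost, iter, Pi.add_apply, ← Finset.sum_sub_distrib, Finset.sum_div]
  exact Finset.sum_congr rfl fun b _ => by ring

lemma Optimal.add_iter [Nonempty T] (h : Optimal w πs) (k : ℕ) :
    Optimal (w + iter w πs k) πs := by
  induction k with
  | zero => simpa [iter] using h
  | succ k ih =>
    refine ⟨h.1, fun π hπ => ?_⟩
    have hN : (0 : ℝ) < 2 * Fintype.card T := by
      have : 0 < Fintype.card T := Fintype.card_pos
      positivity
    have hsum := Finset.sum_le_card_nsmul Finset.univ _ _
      fun b _ => (ih.sens_sub_sens_mem_Icc hπ b).2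
    rw [nsmul_eq_mul, Finset.card_univ] at hsum
    have hdiv := (div_le_iff₀ hN).2 (hsum.trans_eq (by ring :
      _ = (cost (w + iter w πs k) π - cost (w + iter w πs k) πs) * (2 * (Fintype.card T : ℝ))))
    rw [← gap_sub_gap_iter_succ] at hdiv
    linarith

/-- Since the gap of an assignment decreases along the iterates and stays nonnegative, its
decrements tend to zero, and so do the sensitivities they dominate. -/
lemma Optimal.tendsto_sens_sub_sens [Nonempty T] (h : Optimal w πs) (hπ : Function.Injective π)
    (b : T) :
    Tendsto (fun k => sens (w + iter w πs k) πs (πs b) b - sens (w + iter w πs k) πs (π b) b)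
      atTop (𝓝 0) := by
  have hN : (0 : ℝ) < 2 * Fintype.card T := by
    have : 0 < Fintype.card T := Fintype.card_pos
    positivity
  set gap : ℕ → ℝ := fun k => cost (w + iter w πs k) π - cost (w + iter w πs k) πs with hgap
  have hmem := fun k => (h.add_iter k).sens_sub_sens_mem_Icc hπ
  have hanti : Antitone gap := antitone_nat_of_succ_le fun k => by
    rw [← sub_nonneg, hgap, gap_sub_gap_iter_succ]
    exact div_nonneg (Finset.sum_nonneg fun b _ => (hmem k b).1) hN.le
  have hbdd : BddBelow (Set.range gap) :=
    ⟨0, by rintro _ ⟨k, rfl⟩; exact sub_nonneg.2 ((h.add_iter k).2 π hπ)⟩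
  have hlim := tendsto_atTop_ciInf hanti hbdd
  have hdiff := (hlim.sub (hlim.comp (tendsto_add_atTop_nat 1))).mul_const
    (2 * (Fintype.card T : ℝ))
  rw [sub_self, zero_mul] at hdiff
  refine squeeze_zero (fun k => (hmem k b).1) (fun k => ?_) hdiff
  simp only [Function.comp_apply, hgap]
  rw [gap_sub_gap_iter_succ, div_mul_cancel₀ _ hN.ne']
  exact Finset.single_le_sum (f := fun b => sens (w + iter w πs k) πs (πs b) b
    - sens (w + iter w πs k) πs (π b) b) (fun b _ => (hmem k b).1) (Finset.mem_univ b)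

end Sensitivity

theorem stmt16 {A T : Type*} [Fintype A] [Fintype T] [Nonempty A] [Nonempty T]
    (hT : 2 ≤ Fintype.card T) (hAT : Fintype.card T ≤ Fintype.card A)
    (w : A × T → ℝ) (πs : T → A)
    (hopt : Optimal w πs) :
    ∀ a b, Tendsto (fun k => sens (w + iter w πs k) πs a b) atTop (𝓝 0) := by
  classical
  intro a b
  by_cases hab : πs b = a
  · subst hab
    have : Nontrivial T := Fintype.one_lt_card_iff_nontrivial.1 hT
    obtain ⟨b', hb'⟩ := exists_ne b
    have hπ : Function.Injective (πs ∘ Equiv.swap b b') := hopt.1.comp (Equiv.injective _)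
    have hb : (πs ∘ Equiv.swap b b') b ≠ πs b := by simpa using hopt.1.ne hb'
    refine squeeze_zero (fun k => ((hopt.add_iter k).sens_assigned_mem_Icc hπ hb).1)
      (fun k => ?_) (hopt.tendsto_sens_sub_sens hπ b)
    linarith [((hopt.add_iter k).neg_sens_unassigned_mem_Icc hπ hb).1]
  · obtain ⟨π, hπ, rfl⟩ : ∃ π : T → A, Function.Injective π ∧ π b = a :=
      ⟨Equiv.swap a (πs b) ∘ πs, (Equiv.injective _).comp hopt.1, by simp⟩
    have hb : π b ≠ πs b := Ne.symm hab
    rw [← neg_zero]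
    refine tendsto_neg_iff.1 ?_
    rw [neg_neg]
    refine squeeze_zero (fun k => ((hopt.add_iter k).neg_sens_unassigned_mem_Icc hπ hb).1)
      (fun k => ?_) (hopt.tendsto_sens_sub_sens hπ b)
    linarith [((hopt.add_iter k).sens_assigned_mem_Icc hπ hb).1]
end

section
/- Let π* be an optimal assignment for true weights w, let δ be an allowable perturbation for (w, π*), and let ŵ be measured weights such that |ŵ(a,b) − w(a,b)| ≤ ε̄(a,b) for every edge (a,b), where ε̄ : A × T → ℝ is a bound on the measurement errors. If ε̄(a,b) ≤ δ(a,b) for every edge (a,b) assigned in π* and δ(a,b) ≤ −ε̄(a,b) for every edge (a,b) not assigned in π*, then π* is an optimal assignment for the measured weights ŵ. -/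
open Finset Filter Topology

theorem stmt18 {A T : Type*} [Fintype A] [Fintype T] [Nonempty A] [Nonempty T]
    (hAT : Fintype.card T ≤ Fintype.card A)
    (w δ what εbar : A × T → ℝ) (πs : T → A)
    (hopt : Optimal w πs)
    (hδ : Allowable w δ πs)
    (herr : ∀ a b, |what (a, b) - w (a, b)| ≤ εbar (a, b))
    (h1 : ∀ a b, πs b = a → εbar (a, b) ≤ δ (a, b))
    (h2 : ∀ a b, πs b ≠ a → δ (a, b) ≤ -εbar (a, b)) :
    Optimal what πs := by
  refine ⟨hδ.1, fun π hπ => ?_⟩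
  have key : ∑ b, (what (πs b, b) - (w + δ) (πs b, b)) ≤
      ∑ b, (what (π b, b) - (w + δ) (π b, b)) := by
    refine Finset.sum_le_sum fun b _ => ?_
    by_cases h : πs b = π b
    · rw [h]
    · have hs := (abs_le.mp (herr (πs b) b)).2
      have hp := (abs_le.mp (herr (π b) b)).1
      have hs' := h1 (πs b) b rfl
      have hp' := h2 (π b) b h
      simp only [Pi.add_apply]
      linarith
  have hle := hδ.2 π hπ
  simp only [cost, Finset.sum_sub_distrib] at key hle ⊢
  linarith
end
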